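/- arXiv:0806.3834 — 2 statements merged into one kernel-verified Lean document; each statement's English description precedes it below -/
import Mathlib

section
/- The 2×2 matrices H = (1/√2)·[[1,1],[1,-1]] and P = [[1,0],[0,i]] generate a finite group of order exactly 192 under matrix multiplication. -/
/-!
Every product of `Hg` and `Pg` has a unique normal form `ω ^ k • (Pg ^ b * B)` with `k < 8`, `b < 4`
and `B` one of the six matrices `1`, `Xg`, `Hg * Pg ^ j` (`j < 4`), where `ω = (1 + i) / √2`. The
first rows of these six matrices are the six one-qubit stabilizer states up to phase. This gives
the order `8 * 4 * 6 = 192`.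

* Normal forms exist (`normalForm_of_mem_closure`): they are stable under right multiplication by
  both generators. The only relation here that is not immediate is
  `Hg * Pg * Hg = ω • (Pg ^ 3 * (Hg * Pg ^ 3))`, with its variant for `Pg ^ 3`.
* Each normal form is a product of generators (`normalForm_mem_closure`), since
  `(Hg * Pg) ^ 3 = ω • 1` and `Xg = Hg * Pg ^ 2 * Hg`.
* Normal forms are unique (`normalForm_injective`): the zero pattern and the ratio of the entries in
  the first row determine `B`; the remaining nonzero entries then determine `ω ^ k` and `i ^ b`.
-/

open Matrix

noncomputable section

abbrev Mat := Matrix (Fin 2) (Fin 2) ℂ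

/-- The Hadamard gate. -/
def Hg : Mat := ((Real.sqrt 2)⁻¹ : ℝ) • !![1, 1; 1, -1]

/-- The phase gate. -/
def Pg : Mat := !![1, 0; 0, Complex.I]

/-- The π/8 gate. -/
def Tg : Mat := !![1, 0; 0, Complex.exp ((Real.pi / 4 : ℝ) * Complex.I)]

/-- The Pauli matrices. -/
def Xg : Mat := !![0, 1; 1, 0]
def Yg : Mat := !![0, -Complex.I; Complex.I, 0]
def Zg : Mat := !![1, 0; 0, -1]

/-- The primitive eighth root of unity `(1 + i) / √2`, a generator of the scalars in the group. -/
def ω : ℂ := ((Real.sqrt 2)⁻¹ : ℝ) * (1 + Complex.I)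

lemma invSqrtTwo_mul_self : (((Real.sqrt 2)⁻¹ : ℝ) : ℂ) * ((Real.sqrt 2)⁻¹ : ℝ) = 1 / 2 := by
  rw [← Complex.ofReal_mul, ← mul_inv, Real.mul_self_sqrt (by norm_num)]
  norm_num

lemma invSqrtTwo_ne_zero : (((Real.sqrt 2)⁻¹ : ℝ) : ℂ) ≠ 0 := by
  intro h
  have := invSqrtTwo_mul_self
  rw [h] at this
  norm_num at this

lemma ω_sq : ω ^ 2 = Complex.I := by
  unfold ω
  linear_combination (1 + Complex.I) ^ 2 * invSqrtTwo_mul_self + (1 / 2) * Complex.I_sq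

lemma ω_primitive : IsPrimitiveRoot ω 8 := by
  have h4 : ω ^ 4 = -1 := by
    rw [show ω ^ 4 = (ω ^ 2) ^ 2 by ring, ω_sq, Complex.I_sq]
  have h := orderOf_eq_prime_pow (p := 2) (n := 2) (x := ω) (by norm_num [h4])
    (by rw [show ω ^ 2 ^ (2 + 1) = (ω ^ 4) ^ 2 by ring, h4]; norm_num)
  exact IsPrimitiveRoot.iff_orderOf.2 h

lemma I_primitive : IsPrimitiveRoot Complex.I 4 :=
  ω_sq ▸ ω_primitive.pow (by norm_num) (by norm_num)

lemma Hg_eq : Hg = !![(((Real.sqrt 2)⁻¹ : ℝ) : ℂ), ((Real.sqrt 2)⁻¹ : ℝ);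
    ((Real.sqrt 2)⁻¹ : ℝ), -((Real.sqrt 2)⁻¹ : ℝ)] := by
  ext i j
  fin_cases i <;> fin_cases j <;> simp [Hg]

lemma Pg_pow (n : ℕ) : Pg ^ n = !![1, 0; 0, Complex.I ^ n] := by
  induction n with
  | zero => simp [Matrix.one_fin_two]
  | succ n ih => rw [pow_succ, ih, Pg, Matrix.mul_fin_two]; simp [pow_succ]

lemma Hg_mul_Hg : Hg * Hg = 1 := by
  rw [Hg_eq, Matrix.mul_fin_two, Matrix.one_fin_two]
  congr! <;> first | ring1 | linear_combination 2 * invSqrtTwo_mul_self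

lemma Pg_pow_four : Pg ^ 4 = 1 := by
  rw [Pg_pow, Complex.I_pow_four, Matrix.one_fin_two]

lemma Xg_eq : Xg = Hg * Pg ^ 2 * Hg := by
  rw [Hg_eq, Pg_pow, Complex.I_sq, Matrix.mul_fin_two, Matrix.mul_fin_two, Xg]
  congr! <;> first | ring1 | linear_combination (-2) * invSqrtTwo_mul_self

lemma Hg_Pg_Hg : Hg * Pg * Hg = ω • (Pg ^ 3 * (Hg * Pg ^ 3)) := by
  have hI := Complex.I_sq
  have hr := invSqrtTwo_mul_self
  rw [Hg_eq, Pg_pow, Pg, ω]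
  ext i j
  fin_cases i <;> fin_cases j <;> simp <;> grind

lemma Xg_mul_Pg : Xg * Pg = ω ^ 2 • (Pg ^ 3 * Xg) := by
  rw [ω_sq, Pg_pow, Pg, Xg]
  ext i j
  fin_cases i <;> fin_cases j <;> simp

lemma ω_smul_one : ω • (1 : Mat) = (Hg * Pg) ^ 3 := by
  have h : (Hg * Pg) ^ 3 = Hg * Pg * Hg * Pg * (Hg * Pg) := by noncomm_ring
  have h' : Pg ^ 3 * (Hg * Pg ^ 3) * Pg * (Hg * Pg) = Pg ^ 3 * (Hg * Pg ^ 4 * Hg) * Pg := by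
    noncomm_ring
  rw [h, Hg_Pg_Hg, smul_mul_assoc, smul_mul_assoc, h', Pg_pow_four, mul_one, Hg_mul_Hg, mul_one,
    ← pow_succ, Pg_pow_four]

/-- Representatives of the cosets `D * B`, where `D` is the group of the diagonal matrices
`ω ^ k • Pg ^ b`: `inl 0`, `inl 1` and `inr j` stand for `1`, `Xg` and `Hg * Pg ^ j`. Their first rows are,
up to phase, the six one-qubit stabilizer states. -/
def frame : Fin 2 ⊕ Fin 4 → Mat
  | .inl a => Xg ^ (a : ℕ)
  | .inr j => Hg * Pg ^ (j : ℕ)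

lemma frame_mul_Pg (s : Fin 2 ⊕ Fin 4) :
    ∃ (k b : ℕ) (t : Fin 2 ⊕ Fin 4), frame s * Pg = ω ^ k • (Pg ^ b * frame t) := by
  rcases s with a | j
  · fin_cases a
    · exact ⟨0, 1, .inl 0, by simp [frame]⟩
    · exact ⟨2, 3, .inl 1, by simpa [frame] using Xg_mul_Pg⟩
  · refine ⟨0, 0, .inr (j + 1), ?_⟩
    have h (n : ℕ) : Hg * Pg ^ n * Pg = Hg * Pg ^ (n + 1) := by rw [mul_assoc, ← pow_succ]
    simp only [frame, h, pow_zero, one_mul, one_smul]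
    rw [pow_eq_pow_mod (j + 1 : ℕ) Pg_pow_four, Fin.val_add]
    rfl

lemma frame_mul_Hg (s : Fin 2 ⊕ Fin 4) :
    ∃ (k b : ℕ) (t : Fin 2 ⊕ Fin 4), frame s * Hg = ω ^ k • (Pg ^ b * frame t) := by
  rcases s with a | j
  · fin_cases a
    · exact ⟨0, 0, .inr 0, by simp [frame]⟩
    · exact ⟨0, 0, .inr 2, by simp [frame, Xg_eq, mul_assoc, Hg_mul_Hg]⟩
  · fin_cases j
    · exact ⟨0, 0, .inl 0, by simp [frame, Hg_mul_Hg]⟩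
    · exact ⟨1, 3, .inr 3, by simpa [frame] using Hg_Pg_Hg⟩
    · exact ⟨0, 0, .inl 1, by simp [frame, Xg_eq]⟩
    · refine ⟨7, 1, .inr 1, ?_⟩
      -- Multiplying `Hg_Pg_Hg` by `Pg` on the left and `Hg` on the right isolates `Hg * Pg ^ 3 * Hg`.
      have h : Pg * (Hg * Pg * Hg) * Hg = ω • (Pg ^ 4 * (Hg * Pg ^ 3 * Hg)) := by
        rw [Hg_Pg_Hg]; simp only [mul_smul_comm, smul_mul_assoc]; noncomm_ring
      rw [mul_assoc, mul_assoc _ Hg, Hg_mul_Hg, mul_one, Pg_pow_four, one_mul] at h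
      simp only [frame]
      change Hg * Pg ^ 3 * Hg = ω ^ 7 • (Pg ^ 1 * (Hg * Pg ^ 1))
      rw [pow_one, h, smul_smul, ← pow_succ, ω_primitive.pow_eq_one, one_smul]

/-- The normal form `ω ^ k • (Pg ^ b * B)`, with `B` a frame. -/
def normalForm (x : Fin 8 × Fin 4 × (Fin 2 ⊕ Fin 4)) : Mat :=
  ω ^ (x.1 : ℕ) • (Pg ^ (x.2.1 : ℕ) * frame x.2.2)

/-- Exponents in a normal form may be reduced modulo the orders of `ω` and `Pg`. -/
lemma mem_range_normalForm (k b : ℕ) (s : Fin 2 ⊕ Fin 4) :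
    ω ^ k • (Pg ^ b * frame s) ∈ Set.range normalForm :=
  ⟨(⟨k % 8, Nat.mod_lt _ (by norm_num)⟩, ⟨b % 4, Nat.mod_lt _ (by norm_num)⟩, s), by
    simp only [normalForm]
    rw [← pow_eq_pow_mod k ω_primitive.pow_eq_one, ← pow_eq_pow_mod b Pg_pow_four]⟩

lemma normalForm_of_mem_closure {A : Mat} (hA : A ∈ Submonoid.closure ({Hg, Pg} : Set Mat)) :
    A ∈ Set.range normalForm := by
  have step : ∀ (x) (g : Mat),
      (∀ s, ∃ (k b : ℕ) (t : Fin 2 ⊕ Fin 4), frame s * g = ω ^ k • (Pg ^ b * frame t)) →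
      normalForm x * g ∈ Set.range normalForm := by
    rintro ⟨k, b, s⟩ g hg
    obtain ⟨k', b', t, h⟩ := hg s
    have : normalForm (k, b, s) * g = ω ^ (k + k' : ℕ) • (Pg ^ (b + b' : ℕ) * frame t) := by
      simp only [normalForm]
      rw [smul_mul_assoc, mul_assoc, h, mul_smul_comm, smul_smul, ← mul_assoc, ← pow_add,
        ← pow_add]
    rw [this]
    exact mem_range_normalForm _ _ _
  induction hA using Submonoid.closure_induction_right with
  | one => exact ⟨(0, 0, .inl 0), by simp [normalForm, frame]⟩
  | mul_right x _ g hg ih =>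
    obtain ⟨x, rfl⟩ := ih
    rcases hg with rfl | rfl
    · exact step x _ frame_mul_Hg
    · exact step x _ frame_mul_Pg

lemma Hg_mem : Hg ∈ Submonoid.closure ({Hg, Pg} : Set Mat) :=
  Submonoid.subset_closure (by simp)

lemma Pg_mem : Pg ∈ Submonoid.closure ({Hg, Pg} : Set Mat) :=
  Submonoid.subset_closure (by simp)

lemma normalForm_mem_closure (x : Fin 8 × Fin 4 × (Fin 2 ⊕ Fin 4)) :
    normalForm x ∈ Submonoid.closure ({Hg, Pg} : Set Mat) := by
  obtain ⟨k, b, s⟩ := x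
  have hs : frame s ∈ Submonoid.closure ({Hg, Pg} : Set Mat) := by
    rcases s with a | j
    · refine pow_mem ?_ _
      rw [Xg_eq]
      exact mul_mem (mul_mem Hg_mem (pow_mem Pg_mem 2)) Hg_mem
    · exact mul_mem Hg_mem (pow_mem Pg_mem _)
  have h : normalForm (k, b, s) = (ω • (1 : Mat)) ^ (k : ℕ) * (Pg ^ (b : ℕ) * frame s) := by
    simp [normalForm, smul_pow]
  rw [h, ω_smul_one]
  exact mul_mem (pow_mem (pow_mem (mul_mem Hg_mem Pg_mem) 3) _) (mul_mem (pow_mem Pg_mem _) hs)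

lemma range_normalForm :
    Set.range normalForm = (Submonoid.closure ({Hg, Pg} : Set Mat) : Set Mat) :=
  Set.Subset.antisymm (Set.range_subset_iff.2 normalForm_mem_closure)
    fun _ => normalForm_of_mem_closure

lemma ω_pow_inj {k k' : Fin 8} (h : ω ^ (k : ℕ) = ω ^ (k' : ℕ)) : k = k' :=
  Fin.ext (ω_primitive.pow_inj k.2 k'.2 h)

lemma I_pow_inj {b b' : Fin 4} (h : Complex.I ^ (b : ℕ) = Complex.I ^ (b' : ℕ)) : b = b' :=
  Fin.ext (I_primitive.pow_inj b.2 b'.2 h)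

lemma ω_ne_zero : ω ≠ 0 := ω_primitive.ne_zero (by norm_num)

lemma normalForm_inl_zero (k : Fin 8) (b : Fin 4) : normalForm (k, b, .inl 0) =
    !![ω ^ (k : ℕ), 0; 0, ω ^ (k : ℕ) * Complex.I ^ (b : ℕ)] := by
  ext i j
  fin_cases i <;> fin_cases j <;> simp [normalForm, frame, Pg_pow]

lemma normalForm_inl_one (k : Fin 8) (b : Fin 4) : normalForm (k, b, .inl 1) =
    !![0, ω ^ (k : ℕ); ω ^ (k : ℕ) * Complex.I ^ (b : ℕ), 0] := by
  ext i j
  fin_cases i <;> fin_cases j <;> simp [normalForm, frame, Pg_pow, Xg]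

lemma normalForm_inr (k : Fin 8) (b j : Fin 4) : normalForm (k, b, .inr j) =
    (((Real.sqrt 2)⁻¹ : ℝ) : ℂ) • !![ω ^ (k : ℕ), ω ^ (k : ℕ) * Complex.I ^ (j : ℕ);
      ω ^ (k : ℕ) * Complex.I ^ (b : ℕ),
      -(ω ^ (k : ℕ) * Complex.I ^ (b : ℕ) * Complex.I ^ (j : ℕ))] := by
  ext i j
  fin_cases i <;> fin_cases j <;> simp [normalForm, frame, Pg_pow, Hg_eq] <;> ring

lemma normalForm_injective : Function.Injective normalForm := by
  have hω (k : Fin 8) : ω ^ (k : ℕ) ≠ 0 := pow_ne_zero _ ω_ne_zero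
  have hI (b : Fin 4) : Complex.I ^ (b : ℕ) ≠ 0 := pow_ne_zero _ Complex.I_ne_zero
  have split (s : Fin 2 ⊕ Fin 4) : s = .inl 0 ∨ s = .inl 1 ∨ ∃ j, s = .inr j := by
    rcases s with a | j
    · fin_cases a <;> simp
    · simp
  rintro ⟨k, b, s⟩ ⟨k', b', s'⟩ h
  have e (i j : Fin 2) := congrFun (congrFun h i) j
  have h00 := e 0 0
  have h01 := e 0 1
  have h10 := e 1 0
  have h11 := e 1 1
  have hr := invSqrtTwo_ne_zero
  obtain rfl | rfl | ⟨j, rfl⟩ := split s <;> obtain rfl | rfl | ⟨j', rfl⟩ := split s' <;>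
    simp only [normalForm_inl_zero, normalForm_inl_one, normalForm_inr, Matrix.smul_apply,
      Matrix.of_apply, Matrix.cons_val', Matrix.cons_val_zero, Matrix.cons_val_one,
      Matrix.cons_val_fin_one, smul_eq_mul] at h00 h01 h10 h11
  · obtain rfl := ω_pow_inj h00
    obtain rfl := I_pow_inj (mul_left_cancel₀ (hω k) h11)
    rfl
  · exact absurd h00 (hω k)
  · exact absurd h01.symm (mul_ne_zero hr (mul_ne_zero (hω k') (hI j')))
  · exact absurd h00.symm (hω k')
  · obtain rfl := ω_pow_inj h01
    obtain rfl := I_pow_inj (mul_left_cancel₀ (hω k) h10)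
    rfl
  · exact absurd h00.symm (mul_ne_zero hr (hω k'))
  · exact absurd h01 (mul_ne_zero hr (mul_ne_zero (hω k) (hI j)))
  · exact absurd h00 (mul_ne_zero hr (hω k))
  · obtain rfl := ω_pow_inj (mul_left_cancel₀ hr h00)
    obtain rfl := I_pow_inj (mul_left_cancel₀ (hω k) (mul_left_cancel₀ hr h01))
    obtain rfl := I_pow_inj (mul_left_cancel₀ (hω k) (mul_left_cancel₀ hr h10))
    rfl

/-- The matrices H and P generate a finite group of order exactly 192
under matrix multiplication. -/
theorem clifford_group_order :
    (Submonoid.closure ({Hg, Pg} : Set Mat) : Set Mat).Finite ∧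
    Nat.card (Submonoid.closure ({Hg, Pg} : Set Mat)) = 192 ∧
    ∀ A ∈ Submonoid.closure ({Hg, Pg} : Set Mat),
      ∃ B ∈ Submonoid.closure ({Hg, Pg} : Set Mat), A * B = 1 ∧ B * A = 1 := by
  have hr := range_normalForm
  refine ⟨?_, ?_, fun A hA => ?_⟩
  · rw [← hr]
    exact Set.finite_range _
  · change Nat.card (Submonoid.closure ({Hg, Pg} : Set Mat) : Set Mat) = 192
    rw [← hr, Nat.card_range_of_injective normalForm_injective]
    simp
  · induction hA using Submonoid.closure_induction with
    | one => exact ⟨1, one_mem _, one_mul 1, one_mul 1⟩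
    | mem x hx =>
      rcases hx with rfl | rfl
      · exact ⟨Hg, Hg_mem, Hg_mul_Hg, Hg_mul_Hg⟩
      · exact ⟨Pg ^ 3, pow_mem Pg_mem 3, by rw [← pow_succ', Pg_pow_four],
          by rw [← pow_succ, Pg_pow_four]⟩
    | mul x y _ _ ihx ihy =>
      obtain ⟨x', hx', h1, h2⟩ := ihx
      obtain ⟨y', hy', h3, h4⟩ := ihy
      refine ⟨y' * x', mul_mem hy' hx', ?_, ?_⟩
      · rw [mul_assoc, ← mul_assoc y, h3, one_mul, h1]
      · rw [mul_assoc, ← mul_assoc x', h2, one_mul, h4]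
end
end

section
/- The normal form representation is unique: if W_n·T·W_{n-1}·T···T·W₀ = V_m·T·V_{m-1}·T···T·V₀ as matrices, where both expressions are normal forms (W_n, V_m ∈ {I, H, PH}, intermediate factors in {H, PH}, W₀, V₀ ∈ C₁), then m = n, W_i = V_i for all 1 ≤ i ≤ n, and W₀ = V₀. -/
/-!
The idea is to read off a normal form from its conjugation action on the Pauli matrices.
A vector `(x, y, z)` over `ℤ[√2]` stands for `xX + yY + zZ`. Conjugation by `H` and `P` permutes
the coordinates up to sign, and conjugation by `√2 · T` sends `(x, y, z)` to
`(x - y, x + y, √2 z)`. Hence a product `U` with `n` factors `T` acts, after scaling by `√2 ^ n`,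
integrally, and one may look at the result modulo the prime `√2`, i.e. at the parities of the
rational parts.

Just after a `T` the parities are `(s, s, 0)`. Multiplying by `H` turns them into `(0, s, s)` and
by `P * H` into `(s, 0, s)`, and in both cases the next `T` restores `(s, s, 0)` with the same `s`
(`conj_after_T`). The initial vector can be chosen so that `s = 1`. The scaled vector is then
nonzero modulo `√2`, which determines the number of `T`s (`length_le`), and the position of its
even coordinate determines the leftmost factor `1`, `H` or `P * H`. Cancelling that factor and the
`T` after it, one concludes by induction.
-/

open Matrix

noncomputable section

/-- The set of matrices computed by circuits over {H, P}: the Clifford group C₁. -/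
def C1 : Set Mat := Submonoid.closure ({Hg, Pg} : Set Mat)

/-- The matrix Wₙ·T·Wₙ₋₁·T···W₁·T·W₀ where ws = [Wₙ, …, W₁] (the number of
T-factors is the length of ws; for ws = [] the product is just W₀). -/
def nfProd (ws : List Mat) (W0 : Mat) : Mat :=
  ws.foldr (fun w acc => w * Tg * acc) W0

/-- (ws, W₀) is a normal form: the leading factor Wₙ is in {I, H, PH}, the
intermediate factors are in {H, PH}, and W₀ is in the Clifford group. -/
def IsNF (ws : List Mat) (W0 : Mat) : Prop :=
  W0 ∈ C1 ∧ (∀ w ∈ ws.head?, w = 1 ∨ w = Hg ∨ w = Pg * Hg) ∧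
    (∀ w ∈ ws.tail, w = Hg ∨ w = Pg * Hg)

/-! ### Pauli combinations with coefficients in `ℤ[√2]` -/

/-- The embedding `ℤ[√2] → ℂ` with `√2 ↦ √2`. -/
def phi : ℤ√2 →+* ℂ :=
  Zsqrtd.lift ⟨((Real.sqrt 2 : ℝ) : ℂ), by
    rw [← Complex.ofReal_mul, Real.mul_self_sqrt (by norm_num)]; norm_num⟩

/-- The element `√2` of `ℤ[√2]`. -/
def rt : ℤ√2 := ⟨0, 1⟩

lemma phi_injective : Function.Injective phi := by
  apply Zsqrtd.lift_injective
  intro n hn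
  have h1 : n.natAbs * n.natAbs = 2 := by
    have := congrArg Int.natAbs hn
    rw [Int.natAbs_mul] at this
    simpa using this.symm
  have h2 : n.natAbs < 2 := by nlinarith
  interval_cases n.natAbs <;> omega

lemma phi_rt : phi rt = ((Real.sqrt 2 : ℝ) : ℂ) := by
  simp [phi, rt]

lemma sqrt_two_mul_self : ((Real.sqrt 2 : ℝ) : ℂ) * ((Real.sqrt 2 : ℝ) : ℂ) = 2 := by
  rw [← Complex.ofReal_mul, Real.mul_self_sqrt (by norm_num)]; norm_num

lemma sqrt_two_ne_zero : ((Real.sqrt 2 : ℝ) : ℂ) ≠ 0 := by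
  intro h
  have := sqrt_two_mul_self
  rw [h] at this
  norm_num at this

/-- The matrix `xX + yY + zZ` with coefficients in `ℤ[√2]`. -/
def pauli (x y z : ℤ√2) : Mat := phi x • Xg + phi y • Yg + phi z • Zg

lemma pauli_eq (x y z : ℤ√2) :
    pauli x y z = !![phi z, phi x - phi y * Complex.I; phi x + phi y * Complex.I, -phi z] := by
  ext i j
  fin_cases i <;> fin_cases j <;> simp [pauli, Xg, Yg, Zg, sub_eq_add_neg]

lemma pauli_injective {x y z x' y' z' : ℤ√2} (h : pauli x y z = pauli x' y' z') :
    x = x' ∧ y = y' ∧ z = z' := by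
  rw [pauli_eq, pauli_eq] at h
  have h00 := congrFun (congrFun h 0) 0
  have h01 := congrFun (congrFun h 0) 1
  have h10 := congrFun (congrFun h 1) 0
  simp at h00 h01 h10
  have hx : phi x = phi x' := by linear_combination (h01 + h10) / 2
  have hy : phi y = phi y' := by
    have : phi y * Complex.I = phi y' * Complex.I := by linear_combination (h10 - h01) / 2
    exact mul_right_cancel₀ Complex.I_ne_zero this
  exact ⟨phi_injective hx, phi_injective hy, phi_injective h00⟩

lemma pauli_rt_pow_mul (k : ℕ) (x y z : ℤ√2) :
    pauli (rt ^ k * x) (rt ^ k * y) (rt ^ k * z) = phi rt ^ k • pauli x y z := by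
  simp [pauli, smul_smul]

lemma Hg_mul_pauli (x y z : ℤ√2) : Hg * pauli x y z = pauli z (-y) x * Hg := by
  rw [pauli_eq, pauli_eq, Hg, Matrix.smul_mul, Matrix.mul_smul]
  congr 1
  ext i j
  fin_cases i <;> fin_cases j <;> simp [Matrix.mul_apply, Fin.sum_univ_two] <;> ring

lemma Pg_mul_pauli (x y z : ℤ√2) : Pg * pauli x y z = pauli (-y) x z * Pg := by
  have hI := Complex.I_mul_I
  rw [pauli_eq, pauli_eq, Pg]
  ext i j
  fin_cases i <;> fin_cases j <;> simp [Matrix.mul_apply, Fin.sum_univ_two]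
  · linear_combination phi x * hI
  · linear_combination phi y * hI
  · ring

lemma exp_pi_div_four : ((Real.sqrt 2 : ℝ) : ℂ) *
    Complex.exp ((Real.pi / 4 : ℝ) * Complex.I) = 1 + Complex.I := by
  rw [Complex.exp_mul_I, ← Complex.ofReal_cos, ← Complex.ofReal_sin, Real.cos_pi_div_four,
    Real.sin_pi_div_four]
  push_cast
  linear_combination (1 + Complex.I) / 2 * sqrt_two_mul_self

lemma Tg_mul_pauli (x y z : ℤ√2) :
    phi rt • (Tg * pauli x y z) = pauli (x - y) (x + y) (rt * z) * Tg := by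
  have hI := Complex.I_mul_I
  have hs := sqrt_two_mul_self
  have he := exp_pi_div_four
  rw [pauli_eq, pauli_eq, Tg, map_mul, phi_rt]
  set e := Complex.exp ((Real.pi / 4 : ℝ) * Complex.I)
  set r := ((Real.sqrt 2 : ℝ) : ℂ)
  have he' : r = (1 - Complex.I) * e := by
    apply mul_left_cancel₀ sqrt_two_ne_zero
    linear_combination hs - (1 - Complex.I) * he + hI
  ext i j
  fin_cases i <;> fin_cases j <;> simp [Matrix.mul_apply, Fin.sum_univ_two]
  · linear_combination (phi x - phi y * Complex.I) * he' + e * phi y * hI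
  · linear_combination (phi x + phi y * Complex.I) * he + phi y * hI
  · ring

/-! ### Scaled conjugation -/

/-- `Conj U k S x y z` says that `√2 ^ k · U S U⁻¹ = xX + yY + zZ`, in a form free of inverses. -/
def Conj (U : Mat) (k : ℕ) (S : Mat) (x y z : ℤ√2) : Prop :=
  phi rt ^ k • (U * S) = pauli x y z * U

lemma Conj.Hg_mul {U S : Mat} {k : ℕ} {x y z : ℤ√2} (h : Conj U k S x y z) :
    Conj (Hg * U) k S z (-y) x := by
  unfold Conj at *
  rw [Matrix.mul_assoc, ← Matrix.mul_smul, h, ← Matrix.mul_assoc, Hg_mul_pauli, Matrix.mul_assoc]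

lemma Conj.Pg_mul {U S : Mat} {k : ℕ} {x y z : ℤ√2} (h : Conj U k S x y z) :
    Conj (Pg * U) k S (-y) x z := by
  unfold Conj at *
  rw [Matrix.mul_assoc, ← Matrix.mul_smul, h, ← Matrix.mul_assoc, Pg_mul_pauli, Matrix.mul_assoc]

lemma Conj.Tg_mul {U S : Mat} {k : ℕ} {x y z : ℤ√2} (h : Conj U k S x y z) :
    Conj (Tg * U) (k + 1) S (x - y) (x + y) (rt * z) := by
  unfold Conj at *
  rw [pow_succ', mul_smul, Matrix.mul_assoc, ← Matrix.mul_smul, h, ← Matrix.mul_assoc,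
    ← Matrix.smul_mul, Tg_mul_pauli, Matrix.mul_assoc]

lemma Conj.rescale {U S : Mat} {k : ℕ} {x y z : ℤ√2} (h : Conj U k S x y z) (j : ℕ) :
    Conj U (j + k) S (rt ^ j * x) (rt ^ j * y) (rt ^ j * z) := by
  unfold Conj at *
  rw [pow_add, mul_smul, h, pauli_rt_pow_mul, Matrix.smul_mul]

lemma Conj.unique {U S : Mat} {k : ℕ} {x y z x' y' z' : ℤ√2} (hU : IsUnit U)
    (h : Conj U k S x y z) (h' : Conj U k S x' y' z') : x = x' ∧ y = y' ∧ z = z' :=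
  pauli_injective (hU.mul_right_cancel (h.symm.trans h'))

lemma isUnit_Hg : IsUnit Hg := by
  rw [Matrix.isUnit_iff_isUnit_det, isUnit_iff_ne_zero]
  have h := sqrt_two_ne_zero
  simp [Hg, Matrix.det_fin_two]
  intro h0
  have : ((Real.sqrt 2 : ℝ) : ℂ)⁻¹ * ((Real.sqrt 2 : ℝ) : ℂ)⁻¹ = 0 := by linear_combination -h0 / 2
  simp_all

lemma isUnit_Pg : IsUnit Pg := by
  rw [Matrix.isUnit_iff_isUnit_det, isUnit_iff_ne_zero]
  simp [Pg, Matrix.det_fin_two]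

lemma isUnit_Tg : IsUnit Tg := by
  rw [Matrix.isUnit_iff_isUnit_det, isUnit_iff_ne_zero]
  simp [Tg, Matrix.det_fin_two]

/-! ### Clifford matrices -/

lemma isUnit_of_mem_C1 {W : Mat} (hW : W ∈ C1) : IsUnit W := by
  have : Submonoid.closure ({Hg, Pg} : Set Mat) ≤ IsUnit.submonoid Mat := by
    rw [Submonoid.closure_le]
    rintro w (rfl | rfl)
    · exact isUnit_Hg
    · exact isUnit_Pg
  exact this hW

lemma exists_C1_mul_pauli {W : Mat} (hW : W ∈ C1) :
    ∀ x y z, ∃ x' y' z', W * pauli x y z = pauli x' y' z' * W := by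
  unfold C1 at hW
  induction hW using Submonoid.closure_induction with
  | mem w hw =>
    intro x y z
    rcases hw with rfl | rfl
    · exact ⟨_, _, _, Hg_mul_pauli x y z⟩
    · exact ⟨_, _, _, Pg_mul_pauli x y z⟩
  | one => exact fun x y z => ⟨x, y, z, by simp⟩
  | mul a b _ _ ha hb =>
    intro x y z
    obtain ⟨x', y', z', h⟩ := hb x y z
    obtain ⟨x'', y'', z'', h'⟩ := ha x' y' z'
    exact ⟨x'', y'', z'', by
      rw [Matrix.mul_assoc, h, ← Matrix.mul_assoc, h', Matrix.mul_assoc]⟩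

lemma exists_pauli_mul_C1 {W : Mat} (hW : W ∈ C1) :
    ∀ x y z, ∃ x' y' z', W * pauli x' y' z' = pauli x y z * W := by
  unfold C1 at hW
  induction hW using Submonoid.closure_induction with
  | mem w hw =>
    intro x y z
    rcases hw with rfl | rfl
    · exact ⟨z, -y, x, by rw [Hg_mul_pauli, neg_neg]⟩
    · exact ⟨y, -x, z, by rw [Pg_mul_pauli, neg_neg]⟩
  | one => exact fun x y z => ⟨x, y, z, by simp⟩
  | mul a b _ _ ha hb =>
    intro x y z
    obtain ⟨x', y', z', h⟩ := ha x y z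
    obtain ⟨x'', y'', z'', h'⟩ := hb x' y' z'
    exact ⟨x'', y'', z'', by
      rw [Matrix.mul_assoc, h', ← Matrix.mul_assoc, h, Matrix.mul_assoc]⟩

/-- Some `S` becomes `X` under conjugation by `W` and stays integral under conjugation by `V`. -/
lemma exists_start {W V : Mat} (hW : W ∈ C1) (hV : V ∈ C1) :
    ∃ S, Conj W 0 S 1 0 0 ∧ ∃ x y z, Conj V 0 S x y z := by
  obtain ⟨x, y, z, h⟩ := exists_pauli_mul_C1 hW 1 0 0
  obtain ⟨x', y', z', hxyz⟩ := exists_C1_mul_pauli hV x y z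
  exact ⟨pauli x y z, by simpa [Conj] using h, x', y', z', by simpa [Conj] using hxyz⟩

/-! ### Parities along a normal form -/

lemma re_rt_mul (z : ℤ√2) : (rt * z).re = 2 * z.im := by
  simp [rt]

lemma nfProd_cons (w : Mat) (ws : List Mat) (W0 : Mat) :
    nfProd (w :: ws) W0 = w * (Tg * nfProd ws W0) := by
  simp [nfProd, Matrix.mul_assoc]

/-- Just after a `T`, the parities are `(s, s, 0)`, where `s` is determined by the initial vector
alone: the factors `H` and `P * H` each make exactly one of the first two coordinates even, and the
next `T` adds these two coordinates modulo `√2`. -/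
lemma conj_after_T {S W0 : Mat} {x y z : ℤ√2} (h0 : Conj W0 0 S x y z) :
    ∀ ws : List Mat, (∀ w ∈ ws, w = Hg ∨ w = Pg * Hg) →
      ∃ x' y' z', Conj (Tg * nfProd ws W0) (ws.length + 1) S x' y' z' ∧
        x'.re % 2 = (x.re + y.re) % 2 ∧ y'.re % 2 = (x.re + y.re) % 2 ∧ z'.re % 2 = 0
  | [], _ => by
    refine ⟨_, _, _, h0.Tg_mul, ?_⟩
    rw [re_rt_mul, Zsqrtd.re_sub, Zsqrtd.re_add]
    omega
  | w :: ws, hws => by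
    obtain ⟨x', y', z', h, hx, hy, hz⟩ :=
      conj_after_T h0 ws fun v hv => hws v (List.mem_cons_of_mem _ hv)
    rw [nfProd_cons]
    rcases hws w List.mem_cons_self with rfl | rfl
    · refine ⟨_, _, _, h.Hg_mul.Tg_mul, ?_⟩
      rw [re_rt_mul, Zsqrtd.re_sub, Zsqrtd.re_add, Zsqrtd.re_neg]
      omega
    · rw [Matrix.mul_assoc Pg]
      refine ⟨_, _, _, h.Hg_mul.Pg_mul.Tg_mul, ?_⟩
      rw [re_rt_mul, Zsqrtd.re_sub, Zsqrtd.re_add, neg_neg]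
      omega

/-- The parities of a whole normal form: the position of the even coordinate reveals the leftmost
factor. -/
lemma conj_nfProd {S W0 w : Mat} {ws : List Mat} {x y z : ℤ√2} (hN : IsNF (w :: ws) W0)
    (h0 : Conj W0 0 S x y z) :
    ∃ x' y' z', Conj (nfProd (w :: ws) W0) (ws.length + 1) S x' y' z' ∧
      ((w = 1 ∧ x'.re % 2 = (x.re + y.re) % 2 ∧ y'.re % 2 = (x.re + y.re) % 2 ∧
          z'.re % 2 = 0) ∨
        (w = Hg ∧ x'.re % 2 = 0 ∧ y'.re % 2 = (x.re + y.re) % 2 ∧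
          z'.re % 2 = (x.re + y.re) % 2) ∨
        (w = Pg * Hg ∧ x'.re % 2 = (x.re + y.re) % 2 ∧ y'.re % 2 = 0 ∧
          z'.re % 2 = (x.re + y.re) % 2)) := by
  obtain ⟨x', y', z', h, hx, hy, hz⟩ := conj_after_T h0 ws hN.2.2
  rw [nfProd_cons]
  rcases hN.2.1 w rfl with rfl | rfl | rfl
  · rw [Matrix.one_mul]
    exact ⟨x', y', z', h, Or.inl ⟨rfl, hx, hy, hz⟩⟩
  · refine ⟨_, _, _, h.Hg_mul, Or.inr (Or.inl ⟨rfl, ?_⟩)⟩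
    rw [Zsqrtd.re_neg]
    omega
  · rw [Matrix.mul_assoc Pg]
    refine ⟨_, _, _, h.Hg_mul.Pg_mul, Or.inr (Or.inr ⟨rfl, ?_⟩)⟩
    rw [neg_neg]
    omega

lemma exists_conj_nfProd {S W0 : Mat} {ws : List Mat} {x y z : ℤ√2} (hN : IsNF ws W0)
    (h0 : Conj W0 0 S x y z) : ∃ x' y' z', Conj (nfProd ws W0) ws.length S x' y' z' := by
  cases ws with
  | nil => exact ⟨x, y, z, h0⟩
  | cons w ws =>
    obtain ⟨x', y', z', h, -⟩ := conj_nfProd hN h0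
    exact ⟨x', y', z', h⟩

lemma IsNF.of_cons {w W0 : Mat} {ws : List Mat} (h : IsNF (w :: ws) W0) : IsNF ws W0 :=
  ⟨h.1, fun v hv => Or.inr (h.2.2 v (List.mem_of_mem_head? hv)),
    fun v hv => h.2.2 v (List.mem_of_mem_tail hv)⟩

lemma IsNF.isUnit_head {w W0 : Mat} {ws : List Mat} (h : IsNF (w :: ws) W0) : IsUnit w := by
  rcases h.2.1 w rfl with rfl | rfl | rfl
  · exact isUnit_one
  · exact isUnit_Hg
  · exact isUnit_Pg.mul isUnit_Hg

lemma isUnit_nfProd {W0 : Mat} {ws : List Mat} (h : IsNF ws W0) : IsUnit (nfProd ws W0) := by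
  induction ws with
  | nil => exact isUnit_of_mem_C1 h.1
  | cons w ws ih =>
    rw [nfProd_cons]
    exact h.isUnit_head.mul (isUnit_Tg.mul (ih h.of_cons))

/-! ### Uniqueness -/

/-- If `ws` were longer than `vs`, the vector of `nfProd ws W0` would be a multiple of `√2`, but it
has an odd coordinate. -/
lemma length_le {ws vs : List Mat} {W0 V0 : Mat} (hW : IsNF ws W0) (hV : IsNF vs V0)
    (h : nfProd ws W0 = nfProd vs V0) : ws.length ≤ vs.length := by
  by_contra! hlt
  cases ws with
  | nil => simp at hlt
  | cons w ws =>
    obtain ⟨S, hS, x, y, z, hS'⟩ := exists_start hW.1 hV.1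
    obtain ⟨a, b, c, h1, hp⟩ := conj_nfProd hW hS
    obtain ⟨a', b', c', h2⟩ := exists_conj_nfProd hV hS'
    obtain ⟨j, hj⟩ : ∃ j, ws.length + 1 = (j + 1) + vs.length :=
      ⟨ws.length - vs.length, by simp at hlt; omega⟩
    have h3 := h2.rescale (j + 1)
    rw [← hj, ← h] at h3
    obtain ⟨rfl, rfl, rfl⟩ := h1.unique (isUnit_nfProd hW) h3
    simp only [pow_succ', mul_assoc, re_rt_mul, Zsqrtd.re_one, Zsqrtd.re_zero] at hp
    omega

/-- The normal form representation is unique. -/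
theorem normal_form_unique (ws vs : List Mat) (W0 V0 : Mat)
    (hW : IsNF ws W0) (hV : IsNF vs V0)
    (h : nfProd ws W0 = nfProd vs V0) :
    ws = vs ∧ W0 = V0 := by
  induction ws generalizing vs with
  | nil =>
    have hl := length_le hV hW h.symm
    obtain rfl : vs = [] := by simpa using hl
    exact ⟨rfl, h⟩
  | cons w ws ih =>
    have hl := le_antisymm (length_le hW hV h) (length_le hV hW h.symm)
    cases vs with
    | nil => simp at hl
    | cons v vs =>
      obtain ⟨S, hS, x, y, z, hS'⟩ := exists_start hW.1 hV.1
      obtain ⟨a, b, c, h1, hp⟩ := conj_nfProd hW hS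
      obtain ⟨a', b', c', h2, hq⟩ := conj_nfProd hV hS'
      have hl' : ws.length = vs.length := by simpa using hl
      rw [← hl', ← h] at h2
      obtain ⟨rfl, rfl, rfl⟩ := h1.unique (isUnit_nfProd hW) h2
      simp only [Zsqrtd.re_one, Zsqrtd.re_zero] at hp
      have hwv : w = v := by
        rcases hp with ⟨rfl, hp⟩ | ⟨rfl, hp⟩ | ⟨rfl, hp⟩ <;>
          rcases hq with ⟨rfl, hq⟩ | ⟨rfl, hq⟩ | ⟨rfl, hq⟩ <;> first | rfl | omega
      subst hwv
      rw [nfProd_cons, nfProd_cons] at h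
      have h' := isUnit_Tg.mul_left_cancel (hW.isUnit_head.mul_left_cancel h)
      obtain ⟨rfl, rfl⟩ := ih vs hW.of_cons hV.of_cons h'
      exact ⟨rfl, rfl⟩
end
end
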